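/- arXiv:2408.03226 — 2 statements merged into one kernel-verified Lean document; each statement's English description precedes it below -/
import Mathlib

section
/- Every discrete subgroup of the additive group of a normed space is a free Abelian group. Precisely: if X is a real normed vector space and A is an additive subgroup of X which is discrete in the norm topology (equivalently, there exists δ > 0 such that ‖a‖ ≥ δ for every nonzero a ∈ A), then A is a free ℤ-module. -/
/-!
A subgroup filtered by a well-ordered increasing chain is free as soon as the successive quotients
are free. We induct on the cardinality of `A`. A countable `A` is filtered by its intersections with
finite-dimensional subspaces; these are lattices, and the successive quotients are finitely
generated and embed in real vector spaces, hence are free.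

For uncountable `A`, choose `δ > 0` with no nonzero point of `A` of norm less than `δ`, well-order
`A` with all initial segments of smaller cardinality, and enlarge each initial segment until it
contains every point of `A` within `δ / 2` of its own real span `V i`. A `δ / 2`-neighbourhood of a
separable set contains only countably many points of `A`, so the enlarged set still has fewer than
`#A` points, and hence so does `A ⊓ V i`. Points of `A` that are `δ / 2`-close to `U = ⨆ j < i, V j`
lie in `U`, so `A` keeps a gap `δ / 2` in `X ⧸ U`, and the induction hypothesis applies to the image
of `A ⊓ V i`. The subspaces `U` need not be closed, so the quotients are only seminormed, and the
induction runs over seminormed spaces.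
-/

open Cardinal Metric Set TopologicalSpace

section FreeFiltration

variable {R M ι : Type*} [Ring R] [AddCommGroup M] [Module R M]

theorem exists_free_complement_of_free_map {P : Type*} [AddCommGroup P] [Module R P]
    (f : M →ₗ[R] P) (N : Submodule R M) [Module.Free R (N.map f)] :
    ∃ C : Submodule R M, Module.Free R C ∧ Disjoint C f.ker ∧ C ⊔ N ⊓ f.ker = N := by
  obtain ⟨s, hs⟩ := (f.submoduleMap N).exists_rightInverse_of_surjective
    (LinearMap.range_eq_top.2 (f.submoduleMap_surjective N))
  have hfs (y) : f (s y) = y := congrArg Subtype.val (LinearMap.congr_fun hs y)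
  let t : N.map f →ₗ[R] M := N.subtype ∘ₗ s
  have ht : Function.Injective t := fun x y hxy ↦
    Subtype.ext (by rw [← hfs x, ← hfs y]; exact congrArg f hxy)
  refine ⟨t.range, .of_equiv (LinearEquiv.ofInjective t ht), ?_, ?_⟩
  · rw [Submodule.disjoint_def]
    rintro _ ⟨y, rfl⟩ hy
    have : y = 0 := Subtype.ext ((hfs y).symm.trans hy)
    rw [this, map_zero]
  · refine le_antisymm (sup_le ?_ inf_le_left) fun x hx ↦ ?_
    · rintro _ ⟨y, rfl⟩
      exact (s y).2
    · let y : N.map f := ⟨f x, Submodule.mem_map_of_mem hx⟩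
      rw [← add_sub_cancel (t y) x]
      refine Submodule.add_mem_sup ⟨y, rfl⟩ ⟨sub_mem hx (s y).2, ?_⟩
      exact LinearMap.sub_mem_ker_iff.2 (hfs y).symm

theorem iSupIndep_of_disjoint_iSup_Iio [LinearOrder ι] {C : ι → Submodule R M}
    (hC : ∀ i, Disjoint (C i) (⨆ j : Iio i, C j)) : iSupIndep C := by
  rw [iSupIndep_iff_finsetSum_eq_zero_imp_eq_zero]
  intro s v
  induction s using Finset.induction_on_max with
  | empty => simp
  | insert a s hlt ih =>
    intro hv hsum
    rw [Finset.sum_insert fun ha ↦ (hlt a ha).false] at hsum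
    have hva : v a = 0 := by
      refine Submodule.disjoint_def.1 (hC a) _ (hv a (Finset.mem_insert_self a s)) ?_
      rw [eq_neg_of_add_eq_zero_left hsum]
      exact neg_mem (sum_mem fun j hj ↦ Submodule.mem_iSup_of_mem (⟨j, hlt j hj⟩ : Iio a)
        (hv j (Finset.mem_insert_of_mem hj)))
    rw [hva, zero_add] at hsum
    exact (Finset.forall_mem_insert ..).2
      ⟨hva, ih (fun j hj ↦ hv j (Finset.mem_insert_of_mem hj)) hsum⟩

theorem free_iSup_of_iSupIndep {C : ι → Submodule R M} (hC : iSupIndep C)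
    [∀ i, Module.Free R (C i)] : Module.Free R (⨆ i, C i : Submodule R M) := by
  classical
  rw [Submodule.iSup_eq_range_dfinsupp_lsum]
  exact .of_equiv (LinearEquiv.ofInjective _ hC.dfinsupp_lsum_injective)

theorem free_iSup_of_free_map [LinearOrder ι] [WellFoundedLT ι] {N : ι → Submodule R M}
    {P : ι → Type*} [∀ i, AddCommGroup (P i)] [∀ i, Module R (P i)] (f : ∀ i, M →ₗ[R] P i)
    (hker : ∀ i, N i ⊓ (f i).ker = ⨆ j : Iio i, N j)
    (hfree : ∀ i, Module.Free R ((N i).map (f i))) :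
    Module.Free R (⨆ i, N i : Submodule R M) := by
  choose C hCfree hCdisj hCsup using fun i ↦ exists_free_complement_of_free_map (f i) (N i)
  have hCN (i) : C i ≤ N i := le_sup_left.trans (hCsup i).le
  have hindep : iSupIndep C := iSupIndep_of_disjoint_iSup_Iio fun i ↦
    (hCdisj i).mono_right ((iSup_mono fun j : Iio i ↦ hCN j).trans
      ((hker i).symm.le.trans inf_le_right))
  have hNC (i) : N i ≤ ⨆ i, C i := by
    induction i using WellFoundedLT.induction with
    | ind i ih =>
      rw [← hCsup i, hker i]
      exact sup_le (le_iSup C i) (iSup_le fun j ↦ ih j j.2)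
  rw [(iSup_le hNC).antisymm (iSup_mono hCN)]
  exact free_iSup_of_iSupIndep hindep

theorem free_of_free_map_mkQ {S : Type*} [Ring S] [Module S M] [SMul R S] [IsScalarTower R S M]
    [LinearOrder ι] [WellFoundedLT ι] {A : Submodule R M} {V : ι → Submodule S M}
    (hV : Monotone V) (hA : (A : Set M) ⊆ ⋃ i, V i)
    (hfree : ∀ i, Module.Free R ((A ⊓ (V i).restrictScalars R).map
      ((⨆ j : Iio i, V j).mkQ.restrictScalars R))) :
    Module.Free R A := by
  let N (i : ι) : Submodule R M := A ⊓ (V i).restrictScalars R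
  have hN : ⨆ i, N i = A := le_antisymm (iSup_le fun i ↦ inf_le_left) fun a ha ↦ by
    obtain ⟨i, hi⟩ := mem_iUnion.1 (hA ha)
    exact Submodule.mem_iSup_of_mem i ⟨ha, hi⟩
  rw [← hN]
  refine free_iSup_of_free_map (fun i ↦ (⨆ j : Iio i, V j).mkQ.restrictScalars R)
    (fun i ↦ ?_) hfree
  have hdir : Directed (· ≤ ·) fun j : Iio i ↦ (V j).restrictScalars R :=
    (hV.comp (Subtype.mono_coe _)).directed_le
  rw [LinearMap.ker_restrictScalars, Submodule.ker_mkQ, inf_assoc,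
    ← Submodule.restrictScalars_inf, inf_eq_right.2 (iSup_le fun j : Iio i ↦ hV j.2.le),
    Submodule.restrictScalars_iSup, hdir.inf_iSup_eq]

end FreeFiltration

theorem mk_finset_le_max (α : Type*) : #(Finset α) ≤ max #α ℵ₀ := by
  classical
  rw [max_comm]
  exact (mk_le_of_surjective List.toFinset_surjective).trans (mk_list_le_max α)

theorem countable_inter_thickening {X : Type*} [PseudoMetricSpace X] {s t : Set X} {δ : ℝ}
    (hs : s.Pairwise fun x y ↦ δ ≤ dist x y) (ht : IsSeparable t) :
    (s ∩ thickening (δ / 2) t).Countable := by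
  obtain ⟨D, hD, htD⟩ := ht
  suffices (⋃ d ∈ D, s ∩ ball d (δ / 2)).Countable by
    refine this.mono ?_
    rw [← inter_iUnion₂, ← thickening_eq_biUnion_ball, ← thickening_closure (s := D)]
    exact inter_subset_inter_right s (thickening_subset_of_subset _ htD)
  refine hD.biUnion fun d _ ↦ Set.Subsingleton.countable fun x hx y hy ↦ ?_
  by_contra hxy
  have := hs hx.1 hy.1 hxy
  linarith [dist_triangle_right x y d, mem_ball.1 hx.2, mem_ball.1 hy.2]

section NormGap

variable {X : Type*} [SeminormedAddCommGroup X]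

/-- `A` has no nonzero element of norm less than `δ`: the quantitative form of discreteness. In a
seminormed space and for `0 < δ` it also forces the nonzero elements of `A` to have nonzero
seminorm. Subgroups are encoded as `ℤ`-submodules, so that they can be mapped along linear maps and
compared with real subspaces. -/
def HasNormGap (A : Submodule ℤ X) (δ : ℝ) : Prop :=
  ∀ a ∈ A, ‖a‖ < δ → a = 0

variable {A B : Submodule ℤ X} {δ ε : ℝ}

theorem exists_hasNormGap (A : Submodule ℤ X) [DiscreteTopology A] :
    ∃ δ > 0, HasNormGap A δ := by
  obtain ⟨δ, hδ, hball⟩ := exists_ball_inter_eq_singleton_of_mem_discrete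
    (s := (A : Set X)) DiscreteTopology.isDiscrete A.zero_mem
  exact ⟨δ, hδ, fun a ha hlt ↦ hball.subset ⟨mem_ball_zero_iff.2 hlt, ha⟩⟩

theorem HasNormGap.mono (hA : HasNormGap A δ) (hBA : B ≤ A) (hεδ : ε ≤ δ) : HasNormGap B ε :=
  fun b hb hlt ↦ hA b (hBA hb) (hlt.trans_le hεδ)

theorem HasNormGap.pairwise_le_dist (hA : HasNormGap A δ) :
    (A : Set X).Pairwise fun x y ↦ δ ≤ dist x y := fun x hx y hy hxy ↦ by
  by_contra! hlt
  rw [dist_eq_norm] at hlt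
  exact hxy (sub_eq_zero.1 (hA _ (sub_mem hx hy) hlt))

theorem HasNormGap.discreteTopology {X : Type*} [NormedAddCommGroup X] {A : Submodule ℤ X}
    (hδ : 0 < δ) (hA : HasNormGap A δ) : DiscreteTopology A :=
  .of_forall_le_dist hδ fun x y hxy ↦
    hA.pairwise_le_dist x.2 y.2 (Subtype.coe_ne_coe.2 hxy)

variable [NormedSpace ℝ X]

theorem hasNormGap_map_mkQ_iff {V : Submodule ℝ X} :
    HasNormGap (A.map (V.mkQ.restrictScalars ℤ)) δ ↔ (A : Set X) ∩ thickening δ V ⊆ V := by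
  have hnorm (a : X) : ‖V.mkQ a‖ = infDist a V := QuotientAddGroup.norm_mk a
  have hne : (V : Set X).Nonempty := ⟨0, V.zero_mem⟩
  constructor
  · rintro h a ⟨ha, hnear⟩
    refine (Submodule.Quotient.mk_eq_zero V).1 (h _ ⟨a, ha, rfl⟩ ?_)
    exact (hnorm a).trans_lt ((mem_thickening_iff_infDist_lt hne).1 hnear)
  · rintro h _ ⟨a, ha, rfl⟩ hlt
    refine (Submodule.Quotient.mk_eq_zero V).2 (h ⟨ha, ?_⟩)
    exact (mem_thickening_iff_infDist_lt hne).2 ((hnorm a).symm.trans_lt hlt)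

theorem HasNormGap.module_finite [FiniteDimensional ℝ X] (hδ : 0 < δ) (hA : HasNormGap A δ) :
    Module.Finite ℤ A := by
  let π : X →ₗ[ℝ] SeparationQuotient X := (SeparationQuotient.mkCLM ℝ X).toLinearMap
  let B := A.map (π.restrictScalars ℤ)
  have : FiniteDimensional ℝ (SeparationQuotient X) :=
    .of_surjective π SeparationQuotient.surjective_mk
  have hB : HasNormGap B δ := by
    rintro _ ⟨a, ha, rfl⟩ hlt
    rw [hA a ha hlt, map_zero]
  have : DiscreteTopology B := hB.discreteTopology hδ
  refine .of_injective ((π.restrictScalars ℤ).submoduleMap A) ?_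
  rw [injective_iff_map_eq_zero]
  intro a ha
  have : ‖π a‖ = 0 := by rw [show π a = 0 from congrArg Subtype.val ha, norm_zero]
  exact Subtype.ext (hA a a.2 (this.trans_lt hδ))

theorem HasNormGap.module_finite_inf_span (hδ : 0 < δ) (hA : HasNormGap A δ) {s : Set X}
    (hs : s.Finite) :
    Module.Finite ℤ (A ⊓ (Submodule.span ℝ s).restrictScalars ℤ : Submodule ℤ X) := by
  set V := Submodule.span ℝ s
  let g : V →ₗ[ℤ] X := V.subtype.restrictScalars ℤ
  have : FiniteDimensional ℝ V := .span_of_finite ℝ hs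
  have hgap : HasNormGap (A.comap g) δ := fun v hv hlt ↦ Subtype.ext (hA v hv hlt)
  have := hgap.module_finite hδ
  have hmap : (A.comap g).map g = A ⊓ V.restrictScalars ℤ := by
    rw [Submodule.map_comap_eq, inf_comm, LinearMap.range_restrictScalars, Submodule.range_subtype]
  rw [← hmap]
  infer_instance

/-- The points of `A` at distance less than `ε` from the real span of `T`. When
`nearSpan A ε T ⊆ T`, the image of `A` in the quotient by that span has norm gap `ε`. -/
def nearSpan (A : Submodule ℤ X) (ε : ℝ) (T : Set X) : Set X :=
  (A : Set X) ∩ thickening ε (Submodule.span ℝ T)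

theorem monotone_nearSpan (A : Submodule ℤ X) (ε : ℝ) : Monotone (nearSpan A ε) := fun _ _ hST ↦
  inter_subset_inter_right _ (thickening_subset_of_subset ε (Submodule.span_mono hST))

theorem subset_nearSpan (hε : 0 < ε) {T : Set X} (hT : T ⊆ A) : T ⊆ nearSpan A ε T :=
  subset_inter hT (Submodule.subset_span.trans (self_subset_thickening hε _))

theorem inf_span_subset_nearSpan (hε : 0 < ε) (T : Set X) :
    ((A ⊓ (Submodule.span ℝ T).restrictScalars ℤ : Submodule ℤ X) : Set X) ⊆ nearSpan A ε T :=
  inter_subset_inter_right _ (self_subset_thickening hε _)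

theorem nearSpan_iUnion {ι : Type*} [Nonempty ι] {T : ι → Set X} (hT : Directed (· ⊆ ·) T) :
    nearSpan A ε (⋃ i, T i) = ⋃ i, nearSpan A ε (T i) := by
  have hdir : Directed (· ≤ ·) fun i ↦ Submodule.span ℝ (T i) :=
    hT.mono_comp (g := Submodule.span ℝ) _ fun _ _ ↦ Submodule.span_mono
  simp only [nearSpan, Submodule.span_iUnion, Submodule.coe_iSup_of_directed _ hdir,
    thickening_iUnion, inter_iUnion]

theorem HasNormGap.mk_nearSpan_le_max (hA : HasNormGap A δ) (T : Set X) :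
    #(nearSpan A (δ / 2) T) ≤ max #T ℵ₀ := by
  classical
  have hdir : Directed (· ⊆ ·) fun s : Finset T ↦ ((↑) : T → X) '' (s : Set T) :=
    Monotone.directed_le fun _ _ h ↦ image_mono (Finset.coe_subset.2 h)
  have hcount (s : Finset T) : #(nearSpan A (δ / 2) ((↑) '' (s : Set T))) ≤ ℵ₀ :=
    (countable_inter_thickening hA.pairwise_le_dist
      (s.finite_toSet.image _).countable.isSeparable.span).le_aleph0
  calc #(nearSpan A (δ / 2) T)
      = #(⋃ s : Finset T, nearSpan A (δ / 2) ((↑) '' (s : Set T))) := by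
        rw [← nearSpan_iUnion hdir, iUnion_finset_eq_set]
    _ ≤ #(Finset T) * ⨆ s : Finset T, #(nearSpan A (δ / 2) ((↑) '' (s : Set T))) := mk_iUnion_le _
    _ ≤ max #T ℵ₀ * ℵ₀ := mul_le_mul' (mk_finset_le_max T) (ciSup_le' hcount)
    _ = max #T ℵ₀ := mul_aleph0_eq (le_max_right _ _)

/-- The closure of `T` under `nearSpan A ε`, for `0 < ε` and `T ⊆ A`; encoded as the union of the
iterates, which makes its cardinality easy to bound. -/
def saturation (A : Submodule ℤ X) (ε : ℝ) (T : Set X) : Set X :=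
  ⋃ n : ℕ, (nearSpan A ε)^[n] T

theorem subset_saturation (A : Submodule ℤ X) (ε : ℝ) (T : Set X) : T ⊆ saturation A ε T :=
  subset_iUnion (fun n : ℕ ↦ (nearSpan A ε)^[n] T) 0

theorem monotone_saturation (A : Submodule ℤ X) (ε : ℝ) : Monotone (saturation A ε) :=
  fun _ _ hST ↦ iUnion_mono fun n ↦ (monotone_nearSpan A ε).iterate n hST

theorem monotone_iterate_nearSpan (hε : 0 < ε) {T : Set X} (hT : T ⊆ A) :
    Monotone fun n : ℕ ↦ (nearSpan A ε)^[n] T :=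
  (monotone_nearSpan A ε).monotone_iterate_of_le_map (subset_nearSpan hε hT)

theorem nearSpan_saturation_subset (hε : 0 < ε) {T : Set X} (hT : T ⊆ A) :
    nearSpan A ε (saturation A ε T) ⊆ saturation A ε T := by
  rw [saturation, nearSpan_iUnion (monotone_iterate_nearSpan hε hT).directed_le]
  refine iUnion_subset fun n ↦ ?_
  rw [← Function.iterate_succ_apply' (nearSpan A ε)]
  exact subset_iUnion (fun n : ℕ ↦ (nearSpan A ε)^[n] T) (n + 1)

theorem HasNormGap.mk_saturation_le_max (hA : HasNormGap A δ) (T : Set X) :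
    #(saturation A (δ / 2) T) ≤ max #T ℵ₀ := by
  have hcard (n : ℕ) : #((nearSpan A (δ / 2))^[n] T) ≤ max #T ℵ₀ := by
    induction n with
    | zero => exact le_max_left _ _
    | succ n ih =>
      rw [Function.iterate_succ_apply']
      exact (hA.mk_nearSpan_le_max _).trans (max_le ih (le_max_right _ _))
  have := mk_iUnion_le_lift fun n : ℕ ↦ (nearSpan A (δ / 2))^[n] T
  simp only [lift_uzero, mk_nat, lift_aleph0] at this
  calc #(saturation A (δ / 2) T)
      ≤ ℵ₀ * ⨆ n : ℕ, #((nearSpan A (δ / 2))^[n] T) := this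
    _ ≤ ℵ₀ * max #T ℵ₀ := by gcongr; exact ciSup_le' hcard
    _ = max #T ℵ₀ := aleph0_mul_eq (le_max_right _ _)

theorem HasNormGap.map_mkQ_iSup_span {ι : Type*} {S : ι → Set X} (hA : HasNormGap A ε)
    (hS : Directed (· ⊆ ·) S) (hclosed : ∀ i, nearSpan A ε (S i) ⊆ S i) :
    HasNormGap (A.map ((⨆ i, Submodule.span ℝ (S i)).mkQ.restrictScalars ℤ)) ε := by
  rw [← Submodule.span_iUnion, hasNormGap_map_mkQ_iff]
  change nearSpan A ε (⋃ i, S i) ⊆ _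
  cases isEmpty_or_nonempty ι with
  | inl _ =>
    rintro a ⟨ha, hnear⟩
    rw [iUnion_of_empty, Submodule.span_empty, Submodule.bot_coe, thickening_singleton,
      mem_ball_zero_iff] at hnear
    rw [hA a ha hnear]
    exact zero_mem _
  | inr _ =>
    rw [nearSpan_iUnion hS]
    exact (iUnion_mono hclosed).trans Submodule.subset_span

theorem HasNormGap.free_of_countable [Countable A] (hδ : 0 < δ) (hA : HasNormGap A δ) :
    Module.Free ℤ A := by
  obtain ⟨e, he⟩ := exists_surjective_nat A
  let V (n : ℕ) : Submodule ℝ X := Submodule.span ℝ ((fun k ↦ (e k : X)) '' Iic n)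
  refine free_of_free_map_mkQ (V := V)
    (fun _ _ hmn ↦ Submodule.span_mono (image_mono (Iic_subset_Iic.2 hmn))) (fun a ha ↦ ?_)
    fun n ↦ ?_
  · obtain ⟨n, hn⟩ := he ⟨a, ha⟩
    exact mem_iUnion_of_mem n (Submodule.subset_span ⟨n, self_mem_Iic, congrArg Subtype.val hn⟩)
  · have : Module.Finite ℤ (A ⊓ (V n).restrictScalars ℤ : Submodule ℤ X) :=
      hA.module_finite_inf_span hδ ((finite_Iic n).image _)
    have : Module ℚ (X ⧸ ⨆ j : Iio n, V j) := Module.compHom _ (algebraMap ℚ ℝ)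
    have : IsAddTorsionFree (X ⧸ ⨆ j : Iio n, V j) := .of_module_rat _
    infer_instance

theorem HasNormGap.exists_filtration (hδ : 0 < δ) (hA : HasNormGap A δ) (hcard : ℵ₀ < #A) :
    ∃ (_ : LinearOrder A) (_ : WellFoundedLT A) (V : A → Submodule ℝ X),
      Monotone V ∧ (A : Set X) ⊆ ⋃ i, V i ∧
      (∀ i, #(A ⊓ (V i).restrictScalars ℤ : Submodule ℤ X) < #A) ∧
      ∀ i : A, HasNormGap (A.map ((⨆ j : Iio i, V j).mkQ.restrictScalars ℤ)) (δ / 2) := by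
  obtain ⟨_, _, hord⟩ := exists_ord_eq_type_lt A
  let T (i : A) : Set X := Subtype.val '' Iic i
  let S (i : A) : Set X := saturation A (δ / 2) (T i)
  have hTA (i : A) : T i ⊆ A := Subtype.coe_image_subset (A : Set X) (Iic i)
  have hS : Monotone S := (monotone_saturation A _).comp fun _ _ hij ↦
    image_mono (Iic_subset_Iic.2 hij)
  have hclosed (i : A) : nearSpan A (δ / 2) (S i) ⊆ S i :=
    nearSpan_saturation_subset (half_pos hδ) (hTA i)
  refine ⟨_, ‹_›, fun i ↦ Submodule.span ℝ (S i), fun _ _ hij ↦ Submodule.span_mono (hS hij),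
    fun a ha ↦ ?_, fun i ↦ ?_, fun i ↦ ?_⟩
  · exact mem_iUnion_of_mem ⟨a, ha⟩
      (Submodule.subset_span (subset_saturation A _ _ ⟨⟨a, ha⟩, self_mem_Iic, rfl⟩))
  · calc #(A ⊓ (Submodule.span ℝ (S i)).restrictScalars ℤ : Submodule ℤ X)
        ≤ #(S i) := mk_le_mk_of_subset
          ((inf_span_subset_nearSpan (half_pos hδ) (S i)).trans (hclosed i))
      _ ≤ max #(T i) ℵ₀ := hA.mk_saturation_le_max (T i)
      _ ≤ max #(Iic i) ℵ₀ := max_le_max_right _ mk_image_le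
      _ < #A := max_lt (mk_Iic_lt i hord hcard.le) hcard
  · exact (hA.mono le_rfl (half_le_self hδ.le)).map_mkQ_iSup_span
      (hS.comp (Subtype.mono_coe _)).directed_le fun j ↦ hclosed j

theorem HasNormGap.free (hδ : 0 < δ) (hA : HasNormGap A δ) : Module.Free ℤ A := by
  induction hκ : #A using WellFoundedLT.induction generalizing X δ with
  | ind κ ih =>
    subst hκ
    obtain hcount | huncount := le_or_gt #A ℵ₀
    · have : Countable A := mk_le_aleph0_iff.1 hcount
      exact hA.free_of_countable hδ
    · obtain ⟨_, _, V, hV, hAV, hcard, hgap⟩ := hA.exists_filtration hδ huncount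
      exact free_of_free_map_mkQ hV hAV fun i ↦ ih _ (mk_image_le.trans_lt (hcard i)) (half_pos hδ)
        ((hgap i).mono (Submodule.map_mono inf_le_left) le_rfl) rfl

end NormGap

theorem discrete_subgroup_of_normed_space_free_general
    (X : Type*) [SeminormedAddCommGroup X] [NormedSpace ℝ X]
    (A : AddSubgroup X) [DiscreteTopology A] :
    Module.Free ℤ A := by
  have : DiscreteTopology A.toIntSubmodule := ‹DiscreteTopology A›
  obtain ⟨δ, hδ, hgap⟩ := exists_hasNormGap A.toIntSubmodule
  exact hgap.free hδ

/-- Every discrete subgroup of the additive group of a real normed space is a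
free Abelian group (free `ℤ`-module). -/
theorem discrete_subgroup_of_normed_space_free
    (X : Type*) [NormedAddCommGroup X] [NormedSpace ℝ X]
    (A : AddSubgroup X) [DiscreteTopology A] :
    Module.Free ℤ A :=
  discrete_subgroup_of_normed_space_free_general X A
end

section
/- (Shelah's Singular Compactness Theorem, special case.) Let κ be a singular cardinal (an infinite cardinal that is not equal to its own cofinality). If A is an Abelian group of cardinality κ such that every subgroup of A of cardinality smaller than κ is a free ℤ-module, then A is a free ℤ-module. -/
/-!
Sizes of submodules are measured by the number of generators, which removes every restriction on
the cardinality of the ring.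

If all submodules with at most `μ⁺` generators are free, then every set of size `μ` lies in a
`μ`-generated submodule that splits off each of its `μ`-generated extensions. Otherwise extensions
without a complement could be iterated along `μ⁺`; the union of the resulting continuous chain has a
basis, and a closing-off argument yields a limit stage spanned by a part of this basis, which is
therefore a direct summand of the next stage.

For singular `κ`, the generators of the module are covered by fewer than `κ` sets of size less than
`κ`, well-ordered by an index `i`. Bases `X i` of splitting submodules containing them are built
simultaneously in countably many rounds. In each round `X i` is extended to a larger basis, which is
possible because its span splits, so that it absorbs the sets `X j` with `j ≤ i` and the
`X k`-coordinates, for every `k`, of the elements of `X i`. In the limit, the span of each `X i` is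
spanned by a part of every later `X k`. This chain need not be continuous, but the union `L` of its
terms before `k` is still spanned by a part of `X k`, so that the rest of `X k` extends any basis of
`L` to a basis of the span of `X k`. Hence the module is free.
-/

open Cardinal Order Set Submodule

universe u v

/-! ### Sets and well-orders -/

theorem mk_iUnion_le_of_le {ι α : Type u} {μ : Cardinal.{u}} (hμ : ℵ₀ ≤ μ) {s : ι → Set α}
    (hι : #ι ≤ μ) (hs : ∀ i, #(s i) ≤ μ) : #(⋃ i, s i) ≤ μ :=
  (mk_iUnion_le s).trans ((mul_le_mul' hι (ciSup_le' hs)).trans_eq (mul_eq_self hμ))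

theorem mk_union_le_of_le {α : Type u} {μ : Cardinal.{u}} (hμ : ℵ₀ ≤ μ) {s t : Set α}
    (hs : #s ≤ μ) (ht : #t ≤ μ) : #(s ∪ t : Set α) ≤ μ :=
  (mk_union_le s t).trans (add_le_of_le hμ hs ht)

theorem aleph0_lt_of_isSingular {κ : Cardinal.{u}} (hκ : κ.IsSingular) : ℵ₀ < κ :=
  hκ.aleph0_le.lt_of_ne fun h => not_isSingular_aleph0 (h ▸ hκ)

theorem exists_forall_mem_lt_of_mk_lt_cof {I : Type u} [LinearOrder I] {s : Set I}
    (hs : #s < cof I) : ∃ i, ∀ j ∈ s, j < i :=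
  not_isCofinal_iff.1 fun h => (cof_le h).not_gt hs

theorem exists_isLUB_of_bddAbove {I : Type*} [LinearOrder I] [WellFoundedLT I] {s : Set I}
    (h : BddAbove s) : ∃ a, IsLUB s a :=
  ⟨wellFounded_lt.min _ h, wellFounded_lt.min_mem _ h, fun _ hb => wellFounded_lt.min_le hb⟩

theorem accumulate_eq_iUnion_Iio_union {I α : Type*} [PartialOrder I] (s : I → Set α) (k : I) :
    accumulate s k = (⋃ i : Iio k, accumulate s i) ∪ s k := by
  refine subset_antisymm (iUnion₂_subset fun i hik => ?_) (union_subset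
    (iUnion_subset fun i => monotone_accumulate (le_of_lt i.2)) subset_accumulate)
  rcases hik.eq_or_lt with rfl | hlt
  · exact subset_union_right
  · exact subset_union_of_subset_left (subset_accumulate.trans
      (subset_iUnion (fun i : Iio k => accumulate s i) ⟨i, hlt⟩)) _

section Modules

variable {R : Type v} {M : Type u} [Ring R] [AddCommGroup M] [Module R M]

/-! ### Generators -/

theorem spanRank_iSup_le {ι : Type u} {μ : Cardinal.{u}} (hμ : ℵ₀ ≤ μ) {B : ι → Submodule R M}
    (hι : #ι ≤ μ) (hB : ∀ i, (B i).spanRank ≤ μ) : (⨆ i, B i).spanRank ≤ μ := by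
  have hspan : span R (⋃ i, (B i).generators) = ⨆ i, B i := by
    simp only [span_iUnion, span_generators]
  rw [← hspan]
  exact (spanRank_span_le_card _).trans
    (mk_iUnion_le_of_le hμ hι fun i => (generators_card (B i)).trans_le (hB i))

theorem spanRank_sup_le {μ : Cardinal.{u}} (hμ : ℵ₀ ≤ μ) {B C : Submodule R M}
    (hB : B.spanRank ≤ μ) (hC : C.spanRank ≤ μ) : (B ⊔ C).spanRank ≤ μ :=
  spanRank_sup_le_sum_spanRank.trans (add_le_of_le hμ hB hC)

theorem exists_subset_mk_le_subset_span {μ : Cardinal.{u}} (hμ : ℵ₀ ≤ μ) {S X : Set M}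
    (hSX : S ⊆ span R X) (hS : #S ≤ μ) : ∃ T ⊆ X, #T ≤ μ ∧ S ⊆ span R T := by
  choose t htX ht using fun x : S => mem_span_finite_of_mem_span (hSX x.2)
  refine ⟨⋃ x, t x, iUnion_subset htX, ?_, fun x hx => ?_⟩
  · exact mk_iUnion_le_of_le hμ hS fun x => (finset_card_lt_aleph0 _).le.trans hμ
  · exact span_mono (subset_iUnion (fun x => (t x : Set M)) ⟨x, hx⟩) (ht ⟨x, hx⟩)

theorem exists_subset_mk_le_of_le_span {μ : Cardinal.{u}} (hμ : ℵ₀ ≤ μ) {B : Submodule R M}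
    {X : Set M} (hBX : B ≤ span R X) (hB : B.spanRank ≤ μ) :
    ∃ T ⊆ X, #T ≤ μ ∧ B ≤ span R T := by
  rw [← span_generators B, span_le] at hBX
  obtain ⟨T, hTX, hT, hBT⟩ := exists_subset_mk_le_subset_span hμ hBX
    ((generators_card B).trans_le hB)
  exact ⟨T, hTX, hT, B.span_generators ▸ span_le.2 hBT⟩

theorem mk_le_of_linearIndepOn_of_spanRank_le {μ : Cardinal.{u}} (hμ : ℵ₀ ≤ μ) {X : Set M}
    (hX : LinearIndepOn R id X) (hrank : (span R X).spanRank ≤ μ) : #X ≤ μ := by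
  cases subsingleton_or_nontrivial R with
  | inl _ =>
    have := Module.subsingleton R M
    exact (le_one_iff_subsingleton.2 inferInstance).trans (one_le_aleph0.trans hμ)
  | inr _ =>
    obtain ⟨T, hTX, hT, hXT⟩ := exists_subset_mk_le_of_le_span hμ le_rfl hrank
    rwa [eq_of_linearIndepOn_id_of_span_subtype hX hTX (span_le.1 hXT)]

theorem mk_span_le [Countable R] (S : Set M) : #(span R S) ≤ max #S ℵ₀ := by
  have hcover : (span R S : Set M) ⊆ ⋃ l : List S, span R (range fun i => (l.get i : M)) := by
    intro x hx
    obtain ⟨n, c, v, rfl⟩ := (mem_span_set' ..).1 hx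
    refine mem_iUnion.2 ⟨List.ofFn v, sum_mem fun i _ => smul_mem _ _ (subset_span ?_)⟩
    exact ⟨i.cast (by simp), by simp⟩
  have hcount (l : List S) : Countable (span R (range fun i => (l.get i : M))) := inferInstance
  exact (mk_le_mk_of_subset hcover).trans (mk_iUnion_le_of_le (le_max_right _ _)
    (max_comm ℵ₀ #S ▸ mk_list_le_max S)
    fun l => (mk_le_aleph0_iff.2 (hcount l)).trans (le_max_right _ _))

theorem mk_lt_of_spanRank_lt [Countable R] {κ : Cardinal.{u}} (hκ : ℵ₀ < κ) {U : Submodule R M}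
    (hU : U.spanRank < κ) : #U < κ := by
  have hle := mk_span_le (R := R) U.generators
  rw [span_generators, generators_card] at hle
  exact hle.trans_lt (max_lt hU hκ)

theorem spanRank_top_le_mk : (⊤ : Submodule R M).spanRank ≤ #M := by
  rw [← span_univ, ← mk_univ]
  exact spanRank_span_le_card univ

theorem exists_linearIndepOn_span_eq (U : Submodule R M) [Module.Free R U] :
    ∃ X : Set M, LinearIndepOn R id X ∧ span R X = U := by
  let b := Module.Free.chooseBasis R U
  refine ⟨range (U.subtype ∘ b), ?_, ?_⟩
  · exact (b.linearIndependent.map' U.subtype U.ker_subtype).linearIndepOn_id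
  · rw [range_comp, span_image, b.span_eq, map_subtype_top]

theorem free_of_linearIndepOn {X : Set M} (hX : LinearIndepOn R id X) (hspan : span R X = ⊤) :
    Module.Free R M :=
  .of_basis (.mk (v := ((↑) : X → M)) hX (by rw [Subtype.range_coe, hspan]))

theorem spanRank_le_of_disjoint {B D : Submodule R M} (hD : Disjoint B D) :
    D.spanRank ≤ (B ⊔ D).spanRank := by
  have hG (g : (B ⊔ D).generators) := mem_sup.1 ((B ⊔ D).span_generators.le (subset_span g.2))
  choose b hb d hd hbd using hG
  have hle : span R (range d) ≤ D := span_le.2 (range_subset_iff.2 hd)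
  have hsup : D ⊔ B ≤ span R (range d) ⊔ B := by
    rw [sup_comm, sup_comm (span R _)]
    conv_lhs => rw [← (B ⊔ D).span_generators]
    exact span_le.2 fun g hg =>
      mem_sup.2 ⟨b ⟨g, hg⟩, hb _, d ⟨g, hg⟩, subset_span (mem_range_self _), hbd ⟨g, hg⟩⟩
  have hspan : span R (range d) = D :=
    eq_of_le_of_inf_le_of_sup_le hle (hD.symm.le_bot.trans bot_le) hsup
  conv_lhs => rw [← hspan]
  exact (spanRank_span_le_card _).trans (mk_range_le.trans_eq (generators_card _))

/-! ### Direct summands and coordinate submodules -/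

/-- `B` has an internal direct complement in the submodule `C`. -/
def IsSummandOf (B C : Submodule R M) : Prop :=
  ∃ D : Submodule R M, Disjoint B D ∧ B ⊔ D = C

/-- `B` is a direct summand of every submodule with at most `μ` generators that contains it. -/
def SplitsUpTo (μ : Cardinal.{u}) (B : Submodule R M) : Prop :=
  ∀ C : Submodule R M, B ≤ C → C.spanRank ≤ μ → IsSummandOf B C

/-- The submodule `B` is spanned by a part of `X`. When `X` is linearly independent, `B` is then a
coordinate subspace of `span R X`, complemented by the span of the remaining part of `X`. -/
def IsCoordinate (X : Set M) (B : Submodule R M) : Prop :=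
  B ≤ span R (X ∩ B)

theorem IsSummandOf.of_le {B C U : Submodule R M} (h : IsSummandOf B U) (hBC : B ≤ C)
    (hCU : C ≤ U) : IsSummandOf B C := by
  obtain ⟨D, hD, rfl⟩ := h
  refine ⟨D ⊓ C, hD.mono_right inf_le_left, ?_⟩
  rw [← sup_inf_assoc_of_le D hBC, inf_eq_right.2 hCU]

theorem IsSummandOf.exists_superset_basis {X : Set M} {C : Submodule R M}
    (hX : LinearIndepOn R id X) (h : IsSummandOf (span R X) C)
    (hfree : ∀ D : Submodule R M, D.spanRank ≤ C.spanRank → Module.Free R D) :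
    ∃ Y, X ⊆ Y ∧ LinearIndepOn R id Y ∧ span R Y = C := by
  obtain ⟨D, hD, rfl⟩ := h
  have := hfree D (spanRank_le_of_disjoint hD)
  obtain ⟨Y, hY, rfl⟩ := exists_linearIndepOn_span_eq D
  exact ⟨X ∪ Y, subset_union_left, hX.id_union hY hD, span_union X Y⟩

namespace IsCoordinate

variable {X : Set M} {B : Submodule R M}

theorem span_inter_eq (hB : IsCoordinate X B) : span R (X ∩ B) = B :=
  (span_le.2 inter_subset_right).antisymm hB

theorem iSup {ι : Type*} {B : ι → Submodule R M} (hB : ∀ i, IsCoordinate X (B i)) :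
    IsCoordinate X (⨆ i, B i) :=
  iSup_le fun i => (hB i).trans (span_mono (inter_subset_inter_right _ (le_iSup B i)))

theorem disjoint_span_diff (hX : LinearIndepOn R id X) (hB : IsCoordinate X B) :
    Disjoint B (span R (X \ B)) := by
  have h := LinearIndependent.disjoint_span_image hX (s := Subtype.val ⁻¹' (B : Set M))
    (t := Subtype.val ⁻¹' (B : Set M)ᶜ) (disjoint_compl_right.preimage _)
  simp only [id, Subtype.image_preimage_coe] at h
  rwa [hB.span_inter_eq] at h

theorem sup_span_diff (hB : IsCoordinate X B) : B ⊔ span R (X \ B) = span R X := by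
  nth_rw 1 [← hB.span_inter_eq]
  rw [← span_union, inter_union_sdiff]

theorem isSummandOf (hX : LinearIndepOn R id X) (hB : IsCoordinate X B) :
    IsSummandOf B (span R X) :=
  ⟨_, hB.disjoint_span_diff hX, hB.sup_span_diff⟩

theorem linearIndepOn_union_diff (hX : LinearIndepOn R id X) {Z : Set M}
    (hZ : LinearIndepOn R id Z) (hB : IsCoordinate X (span R Z)) :
    LinearIndepOn R id (Z ∪ X \ span R Z) :=
  hZ.id_union (hX.mono sdiff_subset) (hB.disjoint_span_diff hX)

end IsCoordinate

/-! ### Submodules that split off their small extensions -/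

theorem exists_chain_of_le_map {I : Type u} [LinearOrder I] [WellFoundedLT I]
    {μ : Cardinal.{u}} (hμ : ℵ₀ ≤ μ) (hI : ∀ i : I, #(Iio i) ≤ μ)
    {F : Submodule R M → Submodule R M} (hF : ∀ B, B ≤ F B)
    (hFμ : ∀ B, B.spanRank ≤ μ → (F B).spanRank ≤ μ)
    {B₀ : Submodule R M} (hB₀ : B₀.spanRank ≤ μ) :
    ∃ B : I → Submodule R M, Monotone B ∧ (∀ i, B₀ ≤ B i) ∧ (∀ i j, i < j → F (B i) ≤ B j) ∧
      (∀ i, IsSuccLimit i → B i ≤ ⨆ j : Iio i, B j) ∧ ∀ i, (B i).spanRank ≤ μ := by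
  obtain ⟨B, hB⟩ : ∃ B : I → Submodule R M, ∀ i, B i = B₀ ⊔ ⨆ j : Iio i, F (B j) :=
    ⟨WellFoundedLT.fix fun i ih => B₀ ⊔ ⨆ j : Iio i, F (ih j j.2),
      fun i => WellFoundedLT.fix_eq _ i⟩
  have hBB₀ (i) : B₀ ≤ B i := le_sup_left.trans_eq (hB i).symm
  have hFB (i j) (hij : i < j) : F (B i) ≤ B j :=
    (le_iSup (fun i : Iio j => F (B i)) ⟨i, hij⟩).trans (le_sup_right.trans_eq (hB j).symm)
  refine ⟨B, fun i j hij => ?_, hBB₀, hFB, fun i hi => ?_, fun i => ?_⟩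
  · rcases hij.eq_or_lt with rfl | hlt
    exacts [le_rfl, (hF _).trans (hFB i j hlt)]
  · have hle (j : Iio i) : B j ≤ ⨆ j : Iio i, B j := le_iSup (fun j : Iio i => B j) j
    rw [hB i]
    refine sup_le ?_ (iSup_le fun j => ?_)
    · obtain ⟨j, hj⟩ := not_isMin_iff.1 hi.not_isMin
      exact (hBB₀ j).trans (hle ⟨j, hj⟩)
    · obtain ⟨k, hjk, hki⟩ := hi.lt_iff_exists_lt.1 j.2
      exact (hFB j k hki).trans (hle ⟨k, hjk⟩)
  · induction i using WellFoundedLT.induction with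
    | ind i ih =>
      rw [hB i]
      exact spanRank_sup_le hμ hB₀ (spanRank_iSup_le hμ (hI i) fun j => hFμ _ (ih j j.2))

theorem exists_lt_le_span_inter {I : Type u} [LinearOrder I] {μ : Cardinal.{u}} (hμ : ℵ₀ ≤ μ)
    (hI : μ < cof I) {B : I → Submodule R M} (hmono : Monotone B) {X : Set M} (hX : X ⊆ ↑(⨆ i, B i))
    {i : I} (hi : (B i).spanRank ≤ μ) (hiX : B i ≤ span R X) :
    ∃ j, i < j ∧ B i ≤ span R (X ∩ B j) := by
  have : Nonempty I := ⟨i⟩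
  obtain ⟨T, hTX, hT, hBT⟩ := exists_subset_mk_le_of_le_span hμ hiX hi
  have hidx (x : T) : ∃ k, (x : M) ∈ B k := by
    rw [← mem_iSup_of_directed B hmono.directed_le]
    exact hX (hTX x.2)
  choose k hk using hidx
  have hcard : #(insert i (range k) : Set I) ≤ μ :=
    mk_insert_le.trans (add_le_of_le hμ (mk_range_le.trans hT) (one_le_aleph0.trans hμ))
  obtain ⟨j, hj⟩ := exists_forall_mem_lt_of_mk_lt_cof (hcard.trans_lt hI)
  refine ⟨j, hj i (mem_insert _ _), hBT.trans (span_mono fun x hx => ⟨hTX hx, ?_⟩)⟩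
  exact hmono (hj _ (mem_insert_of_mem _ (mem_range_self ⟨x, hx⟩))).le (hk ⟨x, hx⟩)

theorem exists_isCoordinate {I : Type u} [LinearOrder I] [WellFoundedLT I]
    {μ : Cardinal.{u}} (hμ : ℵ₀ ≤ μ) (hI : μ < cof I)
    {B : I → Submodule R M} (hmono : Monotone B)
    (hlim : ∀ i, IsSuccLimit i → B i ≤ ⨆ j : Iio i, B j) (hB : ∀ i, (B i).spanRank ≤ μ)
    {X : Set M} (hX : span R X = ⨆ i, B i) : ∃ i, IsCoordinate X (B i) := by
  have hnext (i) : ∃ j, i < j ∧ B i ≤ span R (X ∩ B j) :=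
    exists_lt_le_span_inter hμ hI hmono (hX ▸ subset_span) (hB i) (hX ▸ le_iSup B i)
  choose g hg hgB using hnext
  obtain ⟨i₀⟩ : Nonempty I := cof_ne_zero_iff.1 (aleph0_pos.trans_le (hμ.trans hI.le)).ne'
  let γ (n : ℕ) : I := g^[n] i₀
  have hγ (n) : γ (n + 1) = g (γ n) := Function.iterate_succ_apply' g n _
  obtain ⟨b, hb⟩ := exists_forall_mem_lt_of_mk_lt_cof
    (((countable_range γ).le_aleph0.trans hμ).trans_lt hI)
  obtain ⟨α, hα⟩ := exists_isLUB_of_bddAbove ⟨b, fun i hi => (hb i hi).le⟩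
  have hγα (n) : γ n ≤ α := hα.1 (mem_range_self n)
  have hlimα : IsSuccLimit α := hα.isSuccLimit_of_notMem (range_nonempty γ) <| by
    rintro ⟨n, rfl⟩
    exact (hγα (n + 1)).not_gt (hγ n ▸ hg (γ n))
  refine ⟨α, (hlim α hlimα).trans (iSup_le fun j => ?_)⟩
  obtain ⟨_, ⟨n, rfl⟩, hj⟩ := (lt_isLUB_iff hα).1 j.2
  exact (hmono hj.le).trans ((hgB (γ n)).trans
    (span_mono (inter_subset_inter_right _ (hmono (hγ n ▸ hγα (n + 1))))))

theorem exists_isSummandOf_map {μ : Cardinal.{u}} (hμ : ℵ₀ ≤ μ)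
    (hfree : ∀ U : Submodule R M, U.spanRank ≤ succ μ → Module.Free R U)
    {F : Submodule R M → Submodule R M} (hF : ∀ B, B ≤ F B)
    (hFμ : ∀ B, B.spanRank ≤ μ → (F B).spanRank ≤ μ)
    {B₀ : Submodule R M} (hB₀ : B₀.spanRank ≤ μ) :
    ∃ B, B₀ ≤ B ∧ B.spanRank ≤ μ ∧ IsSummandOf B (F B) := by
  let I := (succ μ).ord.ToType
  have hIio (i : I) : #(Iio i) ≤ μ := lt_succ_iff.1 (by simpa [I] using mk_Iio_lt i)
  have hcof : μ < cof I := by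
    rw [Ordinal.cof_toType, (isRegular_succ hμ).cof_ord]
    exact lt_succ μ
  obtain ⟨B, hmono, hB₀B, hFB, hlim, hBμ⟩ := exists_chain_of_le_map hμ hIio hF hFμ hB₀
  have hI : #I ≤ succ μ := by rw [mk_toType, card_ord]
  have := hfree (⨆ i, B i) (spanRank_iSup_le (hμ.trans (le_succ μ)) hI
    fun i => (hBμ i).trans (le_succ μ))
  obtain ⟨X, hX, hXspan⟩ := exists_linearIndepOn_span_eq (⨆ i, B i)
  obtain ⟨i, hi⟩ := exists_isCoordinate hμ hcof hmono hlim hBμ hXspan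
  obtain ⟨j, hj⟩ := exists_forall_mem_lt_of_mk_lt_cof (s := {i})
    ((mk_singleton i).trans_lt ((one_lt_aleph0.trans_le hμ).trans hcof))
  refine ⟨B i, hB₀B i, hBμ i, (hi.isSummandOf hX).of_le (hF _) ?_⟩
  rw [hXspan]
  exact (hFB i j (hj i rfl)).trans (le_iSup B j)

theorem exists_splitsUpTo {μ : Cardinal.{u}} (hμ : ℵ₀ ≤ μ)
    (hfree : ∀ U : Submodule R M, U.spanRank ≤ succ μ → Module.Free R U)
    {S : Set M} (hS : #S ≤ μ) :
    ∃ B : Submodule R M, S ⊆ B ∧ B.spanRank ≤ μ ∧ SplitsUpTo μ B := by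
  have hext (B : Submodule R M) : ∃ C, B ≤ C ∧ (B.spanRank ≤ μ → C.spanRank ≤ μ) ∧
      (IsSummandOf B C → SplitsUpTo μ B) := by
    by_cases hB : SplitsUpTo μ B
    · exact ⟨B, le_rfl, id, fun _ => hB⟩
    · obtain ⟨C, hBC, hC, hsum⟩ : ∃ C, B ≤ C ∧ C.spanRank ≤ μ ∧ ¬ IsSummandOf B C := by
        simpa only [SplitsUpTo, not_forall, exists_prop] using hB
      exact ⟨C, hBC, fun _ => hC, fun h => (hsum h).elim⟩
  choose F hF hFμ hsplit using hext
  obtain ⟨B, hSB, hB, hsum⟩ :=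
    exists_isSummandOf_map hμ hfree hF hFμ ((spanRank_span_le_card S).trans hS)
  exact ⟨B, span_le.1 hSB, hB, hsplit B hsum⟩

/-! ### Chains that need not be continuous -/

theorem free_of_isCoordinate {I : Type*} [LinearOrder I] [WellFoundedLT I] {X : I → Set M}
    (hX : ∀ i, LinearIndepOn R id (X i))
    (hcoord : ∀ i k, i < k → IsCoordinate (X k) (span R (X i)))
    (htop : ⨆ i, span R (X i) = ⊤) : Module.Free R M := by
  let L (k : I) : Submodule R M := ⨆ i : Iio k, span R (X i)
  let V : I → Set M := accumulate fun j => X j \ L j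
  have hV (k) : LinearIndepOn R id (V k) ∧ span R (V k) = span R (X k) := by
    induction k using WellFoundedLT.induction with
    | ind k ih =>
      have hli : LinearIndepOn R id (⋃ i : Iio k, V i) :=
        linearIndepOn_iUnion_of_directed
          (Monotone.directed_le fun i j hij => monotone_accumulate hij) fun i => (ih i i.2).1
      have hspan : span R (⋃ i : Iio k, V i) = L k := by
        rw [span_iUnion]
        exact iSup_congr fun i => (ih i i.2).2
      have hL : IsCoordinate (X k) (L k) := IsCoordinate.iSup fun i : Iio k => hcoord i k i.2
      have hVk : V k = (⋃ i : Iio k, V i) ∪ X k \ L k := accumulate_eq_iUnion_Iio_union _ k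
      rw [hVk, ← hspan]
      refine ⟨(hspan ▸ hL).linearIndepOn_union_diff (hX k) hli, ?_⟩
      rw [span_union, hspan, hL.sup_span_diff]
  refine free_of_linearIndepOn
    (linearIndepOn_iUnion_of_directed monotone_accumulate.directed_le fun i => (hV i).1) ?_
  rw [span_iUnion, ← htop]
  exact iSup_congr fun i => (hV i).2

/-! ### Singular compactness -/

variable (R) in
/-- `X` is a basis with at most `μ` elements of a submodule that splits off every extension with at
most `μ` generators. -/
structure IsSplittingBasis (μ : Cardinal.{u}) (X : Set M) : Prop where
  linearIndepOn : LinearIndepOn R id X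
  mk_le : #X ≤ μ
  splitsUpTo : SplitsUpTo μ (span R X)

variable (R) in
/-- One round of the simultaneous construction of the bases of a filtration: `Y i` enlarges `X i`,
its span absorbs the earlier sets `X j`, and for every `k` its span contains enough elements of
`X k` to express the elements of `X i` lying in the span of `X k`. -/
structure IsRefinement {I : Type*} [LE I] (X Y : I → Set M) : Prop where
  subset (i : I) : X i ⊆ Y i
  subset_span {i k : I} (hik : i ≤ k) : X i ⊆ span R (Y k)
  inter_subset_span (i k : I) : X i ∩ span R (X k) ⊆ span R (X k ∩ span R (Y i))

theorem isSplittingBasis_empty (μ : Cardinal.{u}) : IsSplittingBasis R μ (∅ : Set M) where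
  linearIndepOn := linearIndepOn_empty R id
  mk_le := (Cardinal.mk_eq_zero _).trans_le zero_le
  splitsUpTo C _ _ := ⟨C, by rw [span_empty]; exact ⟨disjoint_bot_left, bot_sup_eq C⟩⟩

theorem IsSplittingBasis.exists_superset {μ : Cardinal.{u}} (hμ : ℵ₀ ≤ μ)
    (hfree : ∀ U : Submodule R M, U.spanRank ≤ succ μ → Module.Free R U)
    {X S : Set M} (hX : IsSplittingBasis R μ X) (hS : #S ≤ μ) :
    ∃ Y, X ⊆ Y ∧ S ⊆ span R Y ∧ IsSplittingBasis R μ Y := by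
  obtain ⟨B, hXSB, hB, hsplit⟩ := exists_splitsUpTo hμ hfree (mk_union_le_of_le hμ hX.mk_le hS)
  obtain ⟨hXB, hSB⟩ := union_subset_iff.1 hXSB
  obtain ⟨Y, hXY, hY, rfl⟩ := (hX.splitsUpTo B (span_le.2 hXB) hB).exists_superset_basis
    hX.linearIndepOn fun D hD => hfree D ((hD.trans hB).trans (le_succ μ))
  exact ⟨Y, hXY, hSB, hY, mk_le_of_linearIndepOn_of_spanRank_le hμ hY hB, hsplit⟩

theorem IsSplittingBasis.exists_isRefinement {I : Type u} [Preorder I] {c : I → Cardinal.{u}}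
    (hc : Monotone c) (hc₀ : ∀ i, ℵ₀ ≤ c i) (hcI : ∀ i, #I ≤ c i)
    (hfree : ∀ i, ∀ U : Submodule R M, U.spanRank ≤ succ (c i) → Module.Free R U)
    {X : I → Set M} (hX : ∀ i, IsSplittingBasis R (c i) (X i)) :
    ∃ Y : I → Set M, (∀ i, IsSplittingBasis R (c i) (Y i)) ∧ IsRefinement R X Y := by
  have hcover (i k : I) := exists_subset_mk_le_subset_span (R := R) (hc₀ i)
    (inter_subset_right : X i ∩ span R (X k) ⊆ _)
    ((mk_le_mk_of_subset inter_subset_left).trans (hX i).mk_le)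
  choose T hTX hT hXT using hcover
  have hS (i : I) : #((⋃ j : Iic i, X j) ∪ ⋃ k, T i k : Set M) ≤ c i :=
    mk_union_le_of_le (hc₀ i)
      (mk_iUnion_le_of_le (hc₀ i) ((mk_set_le _).trans (hcI i))
        fun j => (hX j).mk_le.trans (hc j.2))
      (mk_iUnion_le_of_le (hc₀ i) (hcI i) (hT i))
  choose Y hXY hSY hY using fun i => (hX i).exists_superset (hc₀ i) (hfree i) (hS i)
  have hTY (i k : I) : T i k ⊆ span R (Y i) :=
    (subset_iUnion (T i) k).trans (subset_union_right.trans (hSY i))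
  exact ⟨Y, hY, hXY,
    fun {i k} hik => (subset_iUnion (fun j : Iic k => X j) ⟨i, hik⟩).trans
      (subset_union_left.trans (hSY k)),
    fun i k => (hXT i k).trans (span_mono (subset_inter (hTX i k) (hTY i k)))⟩

theorem IsRefinement.isCoordinate_iUnion {I : Type*} [LE I] {X : ℕ → I → Set M}
    (h : ∀ n, IsRefinement R (X n) (X (n + 1))) {i k : I} (hik : i ≤ k) :
    IsCoordinate (⋃ n, X n k) (span R (⋃ n, X n i)) := by
  refine span_le.2 (iUnion_subset fun n x hx => ?_)
  have hxk : x ∈ span R (X (n + 1) k ∩ span R (X (n + 2) i)) :=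
    (h (n + 1)).inter_subset_span i k ⟨(h n).subset i hx, (h n).subset_span hik hx⟩
  exact span_mono (inter_subset_inter (subset_iUnion (X · k) (n + 1))
    (span_mono (subset_iUnion (X · i) (n + 2)))) hxk

theorem free_of_span_iUnion_eq_top {I : Type u} [LinearOrder I] [WellFoundedLT I]
    {c : I → Cardinal.{u}} (hc : Monotone c) (hc₀ : ∀ i, ℵ₀ ≤ c i) (hcI : ∀ i, #I ≤ c i)
    (hfree : ∀ i, ∀ U : Submodule R M, U.spanRank ≤ succ (c i) → Module.Free R U)
    {T : I → Set M} (hT : ∀ i, #(T i) ≤ c i) (htop : span R (⋃ i, T i) = ⊤) :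
    Module.Free R M := by
  choose X₀ _ hTX₀ hX₀ using fun i =>
    (isSplittingBasis_empty (c i)).exists_superset (hc₀ i) (hfree i) (hT i)
  let Family := {X : I → Set M // ∀ i, IsSplittingBasis R (c i) (X i)}
  have hnext (X : Family) : ∃ Y : Family, IsRefinement R X.1 Y.1 := by
    obtain ⟨Y, hY, href⟩ := IsSplittingBasis.exists_isRefinement hc hc₀ hcI hfree X.2
    exact ⟨⟨Y, hY⟩, href⟩
  choose next hnext using hnext
  let X (n : ℕ) : Family := next^[n] ⟨X₀, hX₀⟩
  have href (n) : IsRefinement R (X n).1 (X (n + 1)).1 := by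
    simpa only [X, Function.iterate_succ_apply'] using hnext (X n)
  have hmono (i) : Monotone fun n => (X n).1 i := monotone_nat_of_le_succ fun n => (href n).subset i
  refine free_of_isCoordinate (X := fun i => ⋃ n, (X n).1 i) (fun i =>
    linearIndepOn_iUnion_of_directed (hmono i).directed_le fun n => ((X n).2 i).linearIndepOn)
    (fun i k hik => IsRefinement.isCoordinate_iUnion href hik.le) (top_unique ?_)
  rw [← htop, span_iUnion]
  refine iSup_mono fun i => span_le.2 ((hTX₀ i).trans ?_)
  exact span_mono (subset_iUnion (fun n => (X n).1 i) 0)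

theorem singular_compactness_abelian_general {κ : Cardinal.{u}} (hκ : κ.IsSingular)
    (hrank : (⊤ : Submodule R M).spanRank ≤ κ)
    (hfree : ∀ U : Submodule R M, U.spanRank < κ → Module.Free R U) : Module.Free R M := by
  let G := (⊤ : Submodule R M).generators
  obtain ⟨s, hs, hscard⟩ := exists_cof_eq κ.ord.ToType
  rw [Ordinal.cof_toType] at hscard
  have : NoMaxOrder κ.ord.ToType := noMaxOrder hκ.aleph0_le
  obtain ⟨e⟩ : Nonempty (G ↪ κ.ord.ToType) := by
    rw [← Cardinal.le_def, mk_toType, card_ord, generators_card]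
    exact hrank
  let c (i : s) : Cardinal := max (max #s ℵ₀) #(Iio i.1)
  have hcκ (i) : succ (c i) < κ := hκ.isSuccLimit.succ_lt <|
    max_lt (max_lt (hscard ▸ hκ.cof_ord_lt) (aleph0_lt_of_isSingular hκ))
      (by simpa using mk_Iio_lt i.1)
  have hcover : ⋃ i : s, (↑) '' (e ⁻¹' Iio i.1) = G := by
    rw [← image_iUnion, ← preimage_iUnion, iUnion_coe_set, isCofinal_iff_iUnion_Iio_eq_univ.1 hs,
      preimage_univ, image_univ, Subtype.range_coe]
  refine free_of_span_iUnion_eq_top (c := c)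
    (fun i k hik => max_le_max le_rfl (mk_le_mk_of_subset (Iio_subset_Iio hik)))
    (fun i => (le_max_right _ _).trans (le_max_left _ _))
    (fun i => (le_max_left _ _).trans (le_max_left _ _))
    (fun i U hU => hfree U (hU.trans_lt (hcκ i))) (T := fun i => (↑) '' (e ⁻¹' Iio i.1))
    (fun i => mk_image_le.trans ?_) (by rw [hcover, span_generators])
  exact (mk_preimage_of_injective _ _ e.injective).trans (le_max_right _ _)

end Modules

/-- Shelah's Singular Compactness Theorem (special case for Abelian groups):
if `κ` is a singular cardinal and `A` is a `κ`-free Abelian group of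
cardinality `κ`, then `A` is a free `ℤ`-module. -/
theorem singular_compactness_abelian
    (κ : Cardinal) (hinf : Cardinal.aleph0 ≤ κ) (hsing : κ.ord.cof < κ)
    (A : Type*) [AddCommGroup A] (hcard : Cardinal.mk A = κ)
    (hfree : ∀ B : AddSubgroup A, Cardinal.mk B < κ → Module.Free ℤ B) :
    Module.Free ℤ A := by
  have hκ : κ.IsSingular := ⟨hinf, hsing.ne⟩
  exact singular_compactness_abelian_general hκ (hcard ▸ spanRank_top_le_mk) fun U hU =>
    hfree U.toAddSubgroup (mk_lt_of_spanRank_lt (aleph0_lt_of_isSingular hκ) hU)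
end
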